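/- If n, m, a are non-negative integers with n > 200, m ≥ 1, n − m ≥ 3, and F_n − F_m = 7^a, then n < 6.90212 · 10^{29}. -/

import Mathlib

/-!
The equation has no solution with `n > 200` at all, so the stated bound holds vacuously; this is
shown by congruences.

If `a ≤ 3`, then `F_n - F_m ≥ F_{n-1} > 343`, which is impossible. If `a ≥ 4`, the number
`x = F_n - F_m` satisfies `x ≡ 0` modulo every divisor of `7 ^ 4`, and `x ^ o ≡ 1` modulo every `p`
such that the order of `7` modulo `p` divides `o`. Both conditions depend only on the residues of
`n` and `m` modulo the Pisano period of the modulus. Choosing moduli whose Pisano periods divide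
`16`, `112`, `336`, `1008`, `7056`, `49392` in turn, the residue pairs of `(n, m)` that satisfy all
conditions are refined along this chain of divisors (`sieve_step`): after each step at most six
pairs survive, and none is left modulo `49392 = 2 ^ 4 * 3 ^ 2 * 7 ^ 3`. The hypothesis `a ≥ 4` is
what eliminates the classes of genuine solutions such as `F_14 - F_9 = 7 ^ 3`.
-/

namespace FibSieve

/-- The pair `(F_k mod p, F_{k+1} mod p)`, computed by doubling from `j = (k - 1) / 2` through the
identities for `F_{2j+1}` and `F_{2j+2}`, so that the kernel can evaluate it. The second argument
is fuel: the value is meaningful for `k < 2 ^ fuel`. -/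
def fibPair (p : ℕ) : ℕ → ℕ → ℕ × ℕ
  | 0, _ => (0 % p, 1 % p)
  | _ + 1, 0 => (0 % p, 1 % p)
  | f + 1, k + 1 =>
    let ab := fibPair p f (k / 2)
    let c := (ab.2 * ab.2 + ab.1 * ab.1) % p
    let d := (ab.2 * (2 * ab.1 + ab.2)) % p
    if k % 2 = 0 then (c, d) else (d, (c + d) % p)

lemma fibPair_eq (p f k : ℕ) (hk : k < 2 ^ f) :
    fibPair p f k = (Nat.fib k % p, Nat.fib (k + 1) % p) := by
  induction f generalizing k with
  | zero =>
    obtain rfl : k = 0 := by simpa using hk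
    simp [fibPair]
  | succ f ih =>
    cases k with
    | zero => simp [fibPair]
    | succ k =>
      have hc : ∀ j, ((Nat.fib (j + 1) % p) * (Nat.fib (j + 1) % p)
          + (Nat.fib j % p) * (Nat.fib j % p)) % p = Nat.fib (2 * j + 1) % p := fun j => by
        rw [Nat.fib_two_mul_add_one, sq, sq]
        exact ((Nat.mod_modEq _ _).mul (Nat.mod_modEq _ _)).add
          ((Nat.mod_modEq _ _).mul (Nat.mod_modEq _ _))
      have hd : ∀ j, ((Nat.fib (j + 1) % p) * (2 * (Nat.fib j % p) + Nat.fib (j + 1) % p)) % p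
          = Nat.fib (2 * j + 2) % p := fun j => by
        rw [Nat.fib_two_mul_add_two]
        exact (Nat.mod_modEq _ _).mul (((Nat.mod_modEq _ _).mul_left 2).add (Nat.mod_modEq _ _))
      have hlt : k / 2 < 2 ^ f := by rw [pow_succ] at hk; omega
      simp only [fibPair, ih _ hlt, hc, hd]
      split_ifs with h0
      · have : 2 * (k / 2) = k := by omega
        rw [this]
      · have : 2 * (k / 2) + 1 = k := by omega
        have h2 : Nat.fib (k + 1 + 1) = Nat.fib k + Nat.fib (k + 1) := Nat.fib_add_two
        have h3 : 2 * (k / 2) + 2 = k + 1 := by omega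
        rw [this, h3, h2, Nat.add_mod (Nat.fib k)]

/-- `F_k mod p` for `k < 2 ^ 16`. -/
def fibMod (p k : ℕ) : ℕ := (fibPair p 16 k).1

lemma fibMod_eq (p k : ℕ) (hk : k < 2 ^ 16) : fibMod p k = Nat.fib k % p := by
  rw [fibMod, fibPair_eq p 16 k hk]

/-- A congruence condition `(F_n - F_m) ^ exp ≡ val` modulo `p`, where `period` is a period of the
Fibonacci sequence modulo `p`. -/
structure Test where
  p : ℕ
  period : ℕ
  exp : ℕ
  val : ℕ

/-- `period` really is a period modulo `p`, and the condition holds whenever `F_n - F_m = 7 ^ a`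
with `a ≥ 4`: either `7 ^ exp ≡ 1` modulo `p`, or `p ∣ 7 ^ 4`. -/
def Test.Valid (t : Test) : Prop :=
  1 < t.p ∧ t.period < 2 ^ 16 ∧ fibPair t.p 16 t.period = (0, 1) ∧
    ((7 ^ t.exp % t.p = 1 ∧ t.val = 1) ∨ (7 ^ 4 % t.p = 0 ∧ t.exp = 1 ∧ t.val = 0))

instance (t : Test) : Decidable t.Valid := by unfold Test.Valid; infer_instance

/-- The residues `r` of `n` and `s` of `m` are compatible with the condition `t`. -/
def Test.Passes (t : Test) (r s : ℕ) : Prop :=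
  (fibMod t.p r + (t.p - fibMod t.p s)) ^ t.exp % t.p = t.val

instance (t : Test) (r s : ℕ) : Decidable (t.Passes r s) := by unfold Test.Passes; infer_instance

lemma fib_add_period (p P : ℕ) (h0 : Nat.fib P ≡ 0 [MOD p]) (h1 : Nat.fib (P + 1) ≡ 1 [MOD p])
    (n : ℕ) : Nat.fib (n + P) ≡ Nat.fib n [MOD p] := by
  cases n with
  | zero => simpa using h0
  | succ n =>
    have h := ((h0.mul_left (Nat.fib n)).add (h1.mul_left (Nat.fib (n + 1))))
    rw [← Nat.fib_add] at h
    simpa [add_right_comm] using h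

lemma fib_mod_period (p P N : ℕ) (hP : P ∣ N) (h0 : Nat.fib P ≡ 0 [MOD p])
    (h1 : Nat.fib (P + 1) ≡ 1 [MOD p]) (n : ℕ) : Nat.fib (n % N) ≡ Nat.fib n [MOD p] := by
  have key : ∀ k r, Nat.fib (r + P * k) ≡ Nat.fib r [MOD p] := by
    intro k
    induction k with
    | zero => intro r; simpa using Nat.ModEq.refl _
    | succ k ih =>
      intro r
      rw [mul_add, mul_one, ← add_assoc]
      exact (fib_add_period p P h0 h1 _).trans (ih r)
  obtain ⟨c, rfl⟩ := hP
  have := key (c * (n / (P * c))) (n % (P * c))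
  rw [← mul_assoc, Nat.mod_add_div] at this
  exact this.symm

lemma passes_of_eq {n m a : ℕ} (h : Nat.fib n = Nat.fib m + 7 ^ a) (ha : 4 ≤ a) (t : Test)
    (ht : t.Valid) (N : ℕ) (hN0 : 0 < N) (hN : N ≤ 2 ^ 16) (hP : t.period ∣ N) :
    t.Passes (n % N) (m % N) := by
  obtain ⟨hp, hper, hfib, hval⟩ := ht
  rw [fibPair_eq _ _ _ hper, Prod.mk.injEq] at hfib
  have h0 : Nat.fib t.period ≡ 0 [MOD t.p] := by simpa [Nat.ModEq] using hfib.1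
  have h1 : Nat.fib (t.period + 1) ≡ 1 [MOD t.p] := by
    rw [Nat.ModEq, hfib.2, Nat.mod_eq_of_lt hp]
  have hn := fib_mod_period t.p t.period N hP h0 h1 n
  have hm := fib_mod_period t.p t.period N hP h0 h1 m
  rw [Test.Passes, fibMod_eq _ _ ((Nat.mod_lt n hN0).trans_le hN),
    fibMod_eq _ _ ((Nat.mod_lt m hN0).trans_le hN), hn, hm]
  have hx : Nat.fib n % t.p + (t.p - Nat.fib m % t.p) ≡ 7 ^ a [MOD t.p] := by
    apply Nat.ModEq.add_right_cancel' (Nat.fib m % t.p)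
    have hlt := Nat.mod_lt (Nat.fib m) (by omega : t.p > 0)
    rw [add_assoc, Nat.sub_add_cancel hlt.le]
    have e1 : Nat.fib n % t.p + t.p ≡ Nat.fib n [MOD t.p] := by
      simp [Nat.ModEq]
    refine e1.trans ?_
    rw [h, add_comm]
    exact (Nat.mod_modEq _ _).symm.add_left _
  rw [hx.pow t.exp]
  rcases hval with ⟨h7, hv⟩ | ⟨h7, he, hv⟩
  · have h7' : 7 ^ t.exp ≡ 1 [MOD t.p] := by rw [Nat.ModEq, h7, Nat.mod_eq_of_lt hp]
    have := h7'.pow a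
    rw [one_pow, ← pow_mul, mul_comm, pow_mul] at this
    rw [this, hv, Nat.mod_eq_of_lt hp]
  · rw [he, hv, pow_one]
    exact Nat.mod_eq_zero_of_dvd ((Nat.dvd_of_mod_eq_zero h7).trans (pow_dvd_pow 7 ha))

/-- One refinement of the sieve: every lift to modulus `N * q` of a residue pair in `L` modulo `N`
either fails one of the tests `T` or lies in `L'`. -/
def Refines (N q : ℕ) (T : List Test) (L L' : List (ℕ × ℕ)) : Prop :=
  (∀ t ∈ T, t.Valid ∧ t.period ∣ N * q) ∧
    ∀ rs ∈ L, ∀ i ∈ List.range q, ∀ j ∈ List.range q,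
      (rs.1 + N * i, rs.2 + N * j) ∈ L' ∨ ∃ t ∈ T, ¬ t.Passes (rs.1 + N * i) (rs.2 + N * j)

instance (N q : ℕ) (T : List Test) (L L' : List (ℕ × ℕ)) : Decidable (Refines N q T L L') := by
  unfold Refines; infer_instance

lemma sieve_step {n m a : ℕ} (h : Nat.fib n = Nat.fib m + 7 ^ a) (ha : 4 ≤ a) {N : ℕ} (q : ℕ)
    (T : List Test) {L : List (ℕ × ℕ)} (L' : List (ℕ × ℕ)) (hL : (n % N, m % N) ∈ L)
    (hN0 : 0 < N * q) (hN : N * q ≤ 2 ^ 16) (hR : Refines N q T L L') :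
    (n % (N * q), m % (N * q)) ∈ L' := by
  have hq : 0 < q := Nat.pos_of_mul_pos_left hN0
  have := hR.2 _ hL (n / N % q) (List.mem_range.2 (Nat.mod_lt _ hq)) (m / N % q)
    (List.mem_range.2 (Nat.mod_lt _ hq))
  simp only [← Nat.mod_mul] at this
  refine this.resolve_right ?_
  rintro ⟨t, ht, hf⟩
  exact hf (passes_of_eq h ha t (hR.1 t ht).1 _ hN0 hN (hR.1 t ht).2)

theorem no_solution {n m a : ℕ} (h : Nat.fib n = Nat.fib m + 7 ^ a) (ha : 4 ≤ a) : False := by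
  have s0 : (n % 1, m % 1) ∈ [(0, 0)] := by simp [Nat.mod_one]
  have s1 := sieve_step h ha (N := 1) 16
    [⟨7, 16, 1, 0⟩, ⟨3, 8, 1, 1⟩]
    [(6, 1), (6, 2), (6, 15), (14, 7), (14, 9), (14, 10)]
    s0 (by norm_num) (by norm_num) (by decide +kernel)
  have s2 := sieve_step h ha (N := 16) 7
    [⟨49, 112, 1, 0⟩, ⟨13, 28, 12, 1⟩, ⟨29, 14, 7, 1⟩, ⟨281, 56, 20, 1⟩, ⟨14503, 112, 7251, 1⟩]
    [(22, 97), (22, 15), (14, 103), (46, 87), (14, 9), (46, 25)]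
    s1 (by norm_num) (by norm_num) (by decide +kernel)
  have s3 := sieve_step h ha (N := 112) 3
    [⟨8, 12, 2, 1⟩, ⟨83, 168, 41, 1⟩, ⟨167, 336, 83, 1⟩, ⟨421, 84, 70, 1⟩]
    [(14, 327), (14, 9)]
    s2 (by norm_num) (by norm_num) (by decide +kernel)
  have s4 := sieve_step h ha (N := 336) 3
    [⟨19, 18, 3, 1⟩]
    [(14, 999), (14, 9)]
    s3 (by norm_num) (by norm_num) (by decide +kernel)
  -- The surviving classes `(14, ±9)` come from `F_14 - F_9 = F_14 - F_{-9} = 7 ^ 3`; they persist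
  -- until the condition modulo `7 ^ 4` is available.
  have s5 := sieve_step h ha (N := 1008) 7
    [⟨343, 784, 1, 0⟩, ⟨587, 1176, 293, 1⟩, ⟨3527, 7056, 1763, 1⟩, ⟨3529, 588, 49, 1⟩]
    [(14, 7047), (14, 9)]
    s4 (by norm_num) (by norm_num) (by decide +kernel)
  have s6 := sieve_step h ha (N := 7056) 7
    [⟨2401, 5488, 1, 0⟩, ⟨12347, 24696, 6173, 1⟩, ⟨46649, 1372, 3332, 1⟩]
    []
    s5 (by norm_num) (by norm_num) (by decide +kernel)
  simp at s6

end FibSieve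

/-- If `n > 200`, `m ≥ 1`, `n - m ≥ 3` and `F_n - F_m = 7 ^ a`, then
`n < 6.90212 · 10^29`. -/
theorem fib_sub_fib_pow_seven_bound (n m a : ℕ) (hn : 200 < n) (hm : 1 ≤ m)
    (hnm : 3 ≤ n - m) (h : (Nat.fib n : ℤ) - Nat.fib m = 7 ^ a) :
    (n : ℝ) < 6.90212 * 10 ^ 29 := by
  exfalso
  have h' : Nat.fib n = Nat.fib m + 7 ^ a := by
    zify
    linarith
  rcases Nat.lt_or_ge a 4 with ha | ha
  · obtain ⟨k, rfl⟩ : ∃ k, n = k + 2 := ⟨n - 2, by omega⟩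
    have h1 : Nat.fib m ≤ Nat.fib k := Nat.fib_mono (by omega)
    have h2 : Nat.fib 14 ≤ Nat.fib (k + 1) := Nat.fib_mono (by omega)
    have h3 : Nat.fib 14 = 377 := by norm_num
    have h4 : 7 ^ a ≤ 7 ^ 3 := Nat.pow_le_pow_right (by norm_num) (by omega)
    rw [Nat.fib_add_two] at h'
    omega
  · exact FibSieve.no_solution h' ha
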